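/- arXiv:1406.4674 — 4 statements merged into one kernel-verified Lean document; each statement's English description precedes it below -/
import Mathlib

section
/- Let A, A', A'' be abelian groups, where A' is finitely generated of rank 1. Let ψ : D → A' (with D ⊆ A) be a relative partial dilatation from A to A' with defining pair (v, v'), and let ψ' : D' → A'' (with D' ⊆ A') be a relative partial dilatation from A' to A'' with defining pair (w', w''). Then the image of ψ contains ℤ·v', and the composite partial map χ defined on { x ∈ D : ψ(x) ∈ D' } by χ(x) = ψ'(ψ(x)) is a relative partial dilatation from A to A''. In fact there exist nonzero integers m, n with m·v' = n·w', and (m·v, n·w'') is a defining pair for χ. -/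
/-- If `ψ : D → A'` is a relative partial dilatation from `A` to `A'`
with defining pair `(v, v')`, and `ψ' : D' → A''` is a relative partial dilatation
from `A'` to `A''` with defining pair `(w', w'')`, where `A'` is finitely generated
of rank 1 (its quotient by its torsion subgroup is infinite cyclic), then the image
of `ψ` contains `ℤ·v'`, and the composite partial map is a relative partial
dilatation from `A` to `A''`: there are nonzero integers `m, n` with
`m·v' = n·w'`, and `(m·v, n·w'')` is a defining pair for the composite. -/
theorem relativePartialDilatation_comp
    {A A' A'' : Type*} [AddCommGroup A] [AddCommGroup A'] [AddCommGroup A'']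
    [AddGroup.FG A']
    (u : (A' ⧸ AddCommGroup.torsion A') ≃+ ℤ)
    (D : Set A) (ψ : D → A')
    (D' : Set A') (ψ' : D' → A'')
    (v : A) (v' : A')
    (hv : ∀ n : ℤ, n • v = 0 → n = 0)
    (hv' : ∀ n : ℤ, n • v' = 0 → n = 0)
    (hDv : ∀ m : ℤ, m • v ∈ D)
    (hψv : ∀ m : ℤ, ψ ⟨m • v, hDv m⟩ = m • v')
    (w' : A') (w'' : A'')
    (hw' : ∀ n : ℤ, n • w' = 0 → n = 0)
    (hw'' : ∀ n : ℤ, n • w'' = 0 → n = 0)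
    (hD'w : ∀ m : ℤ, m • w' ∈ D')
    (hψ'w : ∀ m : ℤ, ψ' ⟨m • w', hD'w m⟩ = m • w'') :
    (∀ m : ℤ, ∃ x : D, ψ x = m • v') ∧
      ∃ m n : ℤ, m ≠ 0 ∧ n ≠ 0 ∧ m • v' = n • w' ∧
        (∀ k : ℤ, k • (m • v) = 0 → k = 0) ∧
        (∀ k : ℤ, k • (n • w'') = 0 → k = 0) ∧
        (∀ k : ℤ, ∃ (h₁ : k • (m • v) ∈ D)
            (h₂ : ψ ⟨k • (m • v), h₁⟩ ∈ D'),
            ψ' ⟨ψ ⟨k • (m • v), h₁⟩, h₂⟩ = k • (n • w'')) := by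
  have key : ∀ x : A', u (QuotientAddGroup.mk x) = 0 → ∃ N : ℤ, N ≠ 0 ∧ N • x = 0 := by
    intro x hx
    have h1 : (QuotientAddGroup.mk x : A' ⧸ AddCommGroup.torsion A') = 0 := by
      simpa using hx
    have h2 : x ∈ AddCommGroup.torsion A' := (QuotientAddGroup.eq_zero_iff x).1 h1
    have h3 : IsOfFinAddOrder x := h2
    obtain ⟨N, hN, hNx⟩ := isOfFinAddOrder_iff_nsmul_eq_zero.1 h3
    exact ⟨N, by omega, by simpa using hNx⟩
  refine ⟨fun m => ⟨⟨m • v, hDv m⟩, hψv m⟩, ?_⟩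
  obtain ⟨a, ha⟩ : ∃ a : ℤ, a = u (QuotientAddGroup.mk v') := ⟨_, rfl⟩
  obtain ⟨b, hb⟩ : ∃ b : ℤ, b = u (QuotientAddGroup.mk w') := ⟨_, rfl⟩
  have ha0 : a ≠ 0 := by
    intro h
    obtain ⟨N, hN, hNx⟩ := key v' (ha ▸ h)
    exact hN (hv' N hNx)
  have hb0 : b ≠ 0 := by
    intro h
    obtain ⟨N, hN, hNx⟩ := key w' (hb ▸ h)
    exact hN (hw' N hNx)
  obtain ⟨N, hN, hNx⟩ := key (b • v' - a • w') (by
    rw [QuotientAddGroup.mk_sub, QuotientAddGroup.mk_zsmul, QuotientAddGroup.mk_zsmul,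
      map_sub, map_zsmul, map_zsmul, ← ha, ← hb, smul_eq_mul, smul_eq_mul]
    ring)
  have hm : N * b ≠ 0 := mul_ne_zero hN hb0
  have hn : N * a ≠ 0 := mul_ne_zero hN ha0
  have hmn : (N * b) • v' = (N * a) • w' := by
    rw [smul_sub, sub_eq_zero] at hNx
    rw [mul_smul, mul_smul, hNx]
  refine ⟨N * b, N * a, hm, hn, hmn, ?_, ?_, ?_⟩
  · intro k hk
    rw [← mul_smul] at hk
    exact (mul_eq_zero.1 (hv _ hk)).resolve_right hm
  · intro k hk
    rw [← mul_smul] at hk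
    exact (mul_eq_zero.1 (hw'' _ hk)).resolve_right hn
  · intro k
    have h₁ : k • ((N * b) • v) ∈ D := by
      rw [← mul_smul]
      exact hDv _
    have e : ψ ⟨k • ((N * b) • v), h₁⟩ = (k * (N * a)) • w' := by
      have e1 : (⟨k • ((N * b) • v), h₁⟩ : D) = ⟨(k * (N * b)) • v, hDv _⟩ :=
        Subtype.ext (mul_smul _ _ _).symm
      rw [e1, hψv, mul_smul, hmn, ← mul_smul]
    have h₂ : ψ ⟨k • ((N * b) • v), h₁⟩ ∈ D' := by
      rw [e]
      exact hD'w _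
    refine ⟨h₁, h₂, ?_⟩
    have e2 : (⟨ψ ⟨k • ((N * b) • v), h₁⟩, h₂⟩ : D') = ⟨(k * (N * a)) • w', hD'w _⟩ :=
      Subtype.ext e
    rw [e2, hψ'w, mul_smul]
end

section
/- Let A and A' be oriented finitely generated abelian groups of rank 1, with orientations u_A and u_{A'}. Let ψ : D → A' (with D ⊆ A) be a partial map which is a relative partial dilatation, and suppose (v₁, v₁') and (v₂, v₂') are both defining pairs for ψ. Then u_{A'}(v₁')·u_A(v₂) = u_{A'}(v₂')·u_A(v₁); equivalently, the rational number u_{A'}(v')/u_A(v) is independent of the choice of defining pair (v, v'). In particular the oriented dilatation rate λ(ψ) ∈ ℚ is well defined and nonzero, depending only on ψ and the orientations of A and A'. -/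
theorem exists_zsmul_eq_zero_of_orientation {B : Type*} [AddCommGroup B]
    (u : (B ⧸ AddCommGroup.torsion B) ≃+ ℤ) (v : B)
    (h : u (QuotientAddGroup.mk v : B ⧸ AddCommGroup.torsion B) = 0) :
    ∃ n : ℤ, n ≠ 0 ∧ n • v = 0 := by
  have h1 : (QuotientAddGroup.mk v : B ⧸ AddCommGroup.torsion B) = 0 :=
    (map_eq_zero_iff u u.injective).1 h
  have h2 : v ∈ AddCommGroup.torsion B := (QuotientAddGroup.eq_zero_iff v).1 h1
  have h3 : IsOfFinAddOrder v := h2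
  obtain ⟨n, hn, hv⟩ := isOfFinAddOrder_iff_nsmul_eq_zero.1 h3
  exact ⟨n, by omega, by simpa using hv⟩

theorem orientation_zsmul {B : Type*} [AddCommGroup B]
    (u : (B ⧸ AddCommGroup.torsion B) ≃+ ℤ) (n : ℤ) (v : B) :
    u (QuotientAddGroup.mk (n • v) : B ⧸ AddCommGroup.torsion B) =
      n * u (QuotientAddGroup.mk v : B ⧸ AddCommGroup.torsion B) := by
  rw [QuotientAddGroup.mk_zsmul, map_zsmul, smul_eq_mul]

/-- The oriented dilatation rate of a relative partial dilatation
between oriented finitely generated rank-1 abelian groups is well defined: for any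
two defining pairs `(v₁, v₁')` and `(v₂, v₂')` of `ψ`, one has
`u_{A'}(v₁')·u_A(v₂) = u_{A'}(v₂')·u_A(v₁)`, and moreover `u_A(v₁) ≠ 0` and
`u_{A'}(v₁') ≠ 0`, so `λ(ψ) = u_{A'}(v')/u_A(v) ∈ ℚ` is well defined and nonzero. -/
theorem orientedDilatationRate_well_defined
    {A A' : Type*} [AddCommGroup A] [AddCommGroup A']
    [AddGroup.FG A] [AddGroup.FG A']
    (uA : (A ⧸ AddCommGroup.torsion A) ≃+ ℤ)
    (uA' : (A' ⧸ AddCommGroup.torsion A') ≃+ ℤ)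
    (D : Set A) (ψ : D → A')
    (v₁ v₂ : A) (v₁' v₂' : A')
    (hv₁ : ∀ n : ℤ, n • v₁ = 0 → n = 0)
    (hv₁' : ∀ n : ℤ, n • v₁' = 0 → n = 0)
    (hv₂ : ∀ n : ℤ, n • v₂ = 0 → n = 0)
    (hv₂' : ∀ n : ℤ, n • v₂' = 0 → n = 0)
    (hD₁ : ∀ m : ℤ, m • v₁ ∈ D)
    (hψ₁ : ∀ m : ℤ, ψ ⟨m • v₁, hD₁ m⟩ = m • v₁')
    (hD₂ : ∀ m : ℤ, m • v₂ ∈ D)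
    (hψ₂ : ∀ m : ℤ, ψ ⟨m • v₂, hD₂ m⟩ = m • v₂') :
    uA ((QuotientAddGroup.mk v₁ : A ⧸ AddCommGroup.torsion A)) ≠ 0 ∧
    uA' ((QuotientAddGroup.mk v₁' : A' ⧸ AddCommGroup.torsion A')) ≠ 0 ∧
    uA' ((QuotientAddGroup.mk v₁' : A' ⧸ AddCommGroup.torsion A')) *
        uA ((QuotientAddGroup.mk v₂ : A ⧸ AddCommGroup.torsion A)) =
      uA' ((QuotientAddGroup.mk v₂' : A' ⧸ AddCommGroup.torsion A')) *
        uA ((QuotientAddGroup.mk v₁ : A ⧸ AddCommGroup.torsion A)) := by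
  refine ⟨fun h => ?_, fun h => ?_, ?_⟩
  · obtain ⟨n, hn, h0⟩ := exists_zsmul_eq_zero_of_orientation uA v₁ h
    exact hn (hv₁ n h0)
  · obtain ⟨n, hn, h0⟩ := exists_zsmul_eq_zero_of_orientation uA' v₁' h
    exact hn (hv₁' n h0)
  · generalize ha : uA (QuotientAddGroup.mk v₁ : A ⧸ AddCommGroup.torsion A) = a
    generalize hb : uA (QuotientAddGroup.mk v₂ : A ⧸ AddCommGroup.torsion A) = b
    obtain ⟨n, hn, h0⟩ := exists_zsmul_eq_zero_of_orientation uA (b • v₁ - a • v₂) (by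
      rw [QuotientAddGroup.mk_sub, map_sub, orientation_zsmul, orientation_zsmul, ha, hb]
      ring)
    have h1 : (n * b) • v₁ = (n * a) • v₂ := by
      rw [smul_sub, smul_smul, smul_smul] at h0
      exact sub_eq_zero.1 h0
    have h2 : (n * b) • v₁' = (n * a) • v₂' := by
      rw [← hψ₁, ← hψ₂]
      congr 1
      exact Subtype.ext h1
    have h3 := congrArg
      (fun x : A' => uA' (QuotientAddGroup.mk x : A' ⧸ AddCommGroup.torsion A')) h2
    simp only [orientation_zsmul] at h3
    apply mul_left_cancel₀ hn
    linarith
end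

section
/- Let A, A', A'' be oriented finitely generated abelian groups of rank 1. Let ψ : D → A' (with D ⊆ A) be a relative partial dilatation from A to A' and ψ' : D' → A'' (with D' ⊆ A') a relative partial dilatation from A' to A''. Then the composite partial map χ defined on { x ∈ D : ψ(x) ∈ D' } by χ(x) = ψ'(ψ(x)) is a relative partial dilatation from A to A'', and its oriented dilatation rate satisfies λ(χ) = λ(ψ)·λ(ψ'); that is, the oriented dilatation rate is multiplicative under composition of partial dilatations. -/
theorem exists_zsmul_of_u_eq_zero {A : Type*} [AddCommGroup A]
    (u : (A ⧸ AddCommGroup.torsion A) ≃+ ℤ) (x : A)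
    (hx : u (QuotientAddGroup.mk x : A ⧸ AddCommGroup.torsion A) = 0) :
    ∃ n : ℤ, n ≠ 0 ∧ n • x = 0 := by
  have h1 : (QuotientAddGroup.mk x : A ⧸ AddCommGroup.torsion A) = 0 := by
    simpa using hx
  have h2 : x ∈ AddCommGroup.torsion A := (QuotientAddGroup.eq_zero_iff x).1 h1
  have h3 : IsOfFinAddOrder x := h2
  obtain ⟨n, hn, h⟩ := isOfFinAddOrder_iff_nsmul_eq_zero.1 h3
  exact ⟨n, by omega, by simpa using h⟩

theorem u_zsmul {A : Type*} [AddCommGroup A]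
    (u : (A ⧸ AddCommGroup.torsion A) ≃+ ℤ) (n : ℤ) (x : A) :
    u (QuotientAddGroup.mk (n • x) : A ⧸ AddCommGroup.torsion A) =
      n * u (QuotientAddGroup.mk x : A ⧸ AddCommGroup.torsion A) := by
  rw [QuotientAddGroup.mk_zsmul, map_zsmul, smul_eq_mul]

theorem u_ne_zero {A : Type*} [AddCommGroup A]
    (u : (A ⧸ AddCommGroup.torsion A) ≃+ ℤ) (x : A)
    (hx : ∀ n : ℤ, n • x = 0 → n = 0) :
    u (QuotientAddGroup.mk x : A ⧸ AddCommGroup.torsion A) ≠ 0 := by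
  intro h
  obtain ⟨n, hn, h⟩ := exists_zsmul_of_u_eq_zero u x h
  exact hn (hx n h)

/-- The oriented dilatation rate is multiplicative under composition of
relative partial dilatations between oriented finitely generated rank-1 abelian
groups: the composite partial map `χ = ψ' ∘ ψ` is a relative partial dilatation
from `A` to `A''` with some defining pair `(z, z'')`, and
`λ(χ) = λ(ψ)·λ(ψ')`. -/
theorem orientedDilatationRate_comp
    {A A' A'' : Type*} [AddCommGroup A] [AddCommGroup A'] [AddCommGroup A'']
    [AddGroup.FG A] [AddGroup.FG A'] [AddGroup.FG A'']
    (uA : (A ⧸ AddCommGroup.torsion A) ≃+ ℤ)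
    (uA' : (A' ⧸ AddCommGroup.torsion A') ≃+ ℤ)
    (uA'' : (A'' ⧸ AddCommGroup.torsion A'') ≃+ ℤ)
    (D : Set A) (ψ : D → A')
    (D' : Set A') (ψ' : D' → A'')
    (v : A) (v' : A')
    (hv : ∀ n : ℤ, n • v = 0 → n = 0)
    (hv' : ∀ n : ℤ, n • v' = 0 → n = 0)
    (hDv : ∀ m : ℤ, m • v ∈ D)
    (hψv : ∀ m : ℤ, ψ ⟨m • v, hDv m⟩ = m • v')
    (w' : A') (w'' : A'')
    (hw' : ∀ n : ℤ, n • w' = 0 → n = 0)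
    (hw'' : ∀ n : ℤ, n • w'' = 0 → n = 0)
    (hD'w : ∀ m : ℤ, m • w' ∈ D')
    (hψ'w : ∀ m : ℤ, ψ' ⟨m • w', hD'w m⟩ = m • w'') :
    ∃ (z : A) (z'' : A''),
      (∀ n : ℤ, n • z = 0 → n = 0) ∧
      (∀ n : ℤ, n • z'' = 0 → n = 0) ∧
      (∀ k : ℤ, ∃ (h₁ : k • z ∈ D) (h₂ : ψ ⟨k • z, h₁⟩ ∈ D'),
          ψ' ⟨ψ ⟨k • z, h₁⟩, h₂⟩ = k • z'') ∧
      (uA'' ((QuotientAddGroup.mk z'' : A'' ⧸ AddCommGroup.torsion A'')) : ℚ) /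
          (uA ((QuotientAddGroup.mk z : A ⧸ AddCommGroup.torsion A)) : ℚ) =
        ((uA' ((QuotientAddGroup.mk v' : A' ⧸ AddCommGroup.torsion A')) : ℚ) /
            (uA ((QuotientAddGroup.mk v : A ⧸ AddCommGroup.torsion A)) : ℚ)) *
          ((uA'' ((QuotientAddGroup.mk w'' : A'' ⧸ AddCommGroup.torsion A'')) : ℚ) /
            (uA' ((QuotientAddGroup.mk w' : A' ⧸ AddCommGroup.torsion A')) : ℚ)) := by
  have ha := u_ne_zero uA' v' hv'
  have hb := u_ne_zero uA' w' hw'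
  have hc := u_ne_zero uA v hv
  obtain ⟨a, hae⟩ : ∃ a, a = uA' (QuotientAddGroup.mk v' : A' ⧸ AddCommGroup.torsion A') :=
    ⟨_, rfl⟩
  obtain ⟨b, hbe⟩ : ∃ b, b = uA' (QuotientAddGroup.mk w' : A' ⧸ AddCommGroup.torsion A') :=
    ⟨_, rfl⟩
  obtain ⟨n, hn, hnz⟩ := exists_zsmul_of_u_eq_zero uA' (b • v' - a • w') (by
    rw [QuotientAddGroup.mk_sub, map_sub, u_zsmul, u_zsmul, ← hae, ← hbe]
    ring)
  rw [← hae] at ha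
  rw [← hbe] at hb
  have key : (n * b) • v' = (n * a) • w' := by
    rw [smul_sub, sub_eq_zero] at hnz
    rw [mul_smul, mul_smul, hnz]
  have e1 : ∀ k : ℤ, ∀ x ∈ D, x = k • v → ∀ h : x ∈ D, ψ ⟨x, h⟩ = k • v' := by
    intro k x _ hx h
    subst hx
    exact hψv k
  have e2 : ∀ k : ℤ, ∀ x, x = k • w' → ∀ h : x ∈ D', ψ' ⟨x, h⟩ = k • w'' := by
    intro k x hx h
    subst hx
    exact hψ'w k
  refine ⟨(n * b) • v, (n * a) • w'', ?_, ?_, ?_, ?_⟩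
  · intro k hk
    rw [← mul_smul] at hk
    exact (mul_eq_zero.1 (hv _ hk)).resolve_right (mul_ne_zero hn hb)
  · intro k hk
    rw [← mul_smul] at hk
    exact (mul_eq_zero.1 (hw'' _ hk)).resolve_right (mul_ne_zero hn ha)
  · intro k
    have h1 : k • (n * b) • v ∈ D := by
      rw [← mul_smul]
      exact hDv _
    have h2 : ψ ⟨k • (n * b) • v, h1⟩ = (k * (n * a)) • w' := by
      rw [e1 (k * (n * b)) _ h1 (mul_smul _ _ _).symm h1, mul_smul, key, ← mul_smul]
    refine ⟨h1, by rw [h2]; exact hD'w _, ?_⟩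
    rw [e2 _ _ h2, mul_smul]
  · rw [u_zsmul, u_zsmul, ← hae, ← hbe]
    have ha' : (a : ℚ) ≠ 0 := by exact_mod_cast ha
    have hb' : (b : ℚ) ≠ 0 := by exact_mod_cast hb
    have hn' : (n : ℚ) ≠ 0 := by exact_mod_cast hn
    have hc' : (uA (QuotientAddGroup.mk v : A ⧸ AddCommGroup.torsion A) : ℚ) ≠ 0 := by
      exact_mod_cast hc
    push_cast
    field_simp
end

section
/- Let G be a group and A an abelian group containing an element of infinite order. Suppose that for each g ∈ G there are given a subset D_g ⊆ A and a map ψ_g : D_g → A such that: (i) each ψ_g is a partial dilatation of A; (ii) D_e = A and ψ_e is the identity map of A, where e is the identity of G; and (iii) for all g, h ∈ G and all x ∈ D_g with ψ_g(x) ∈ D_h, one has x ∈ D_{gh} and ψ_{gh}(x) = ψ_h(ψ_g(x)) (that is, ψ_{gh} extends the composition of ψ_g followed by ψ_h). Then the dilatation rate function λ : G → ℚˣ defined by λ(g) = λ(ψ_g) is a group homomorphism: λ(gh) = λ(g)·λ(h) for all g, h ∈ G, and λ(e) = 1. -/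
/-- If a group `G` partially acts on the right on an abelian group `A`
(containing an element of infinite order) by partial dilatations, then the
dilatation rate function `λ : G → ℚˣ`, `λ(g) = p(g)/q(g)`, is a group homomorphism:
`λ(gh) = λ(g)·λ(h)` and `λ(e) = 1`. -/
theorem dilatationRate_is_hom
    {G : Type*} [Group G] {A : Type*} [AddCommGroup A]
    (a : A) (ha : ∀ n : ℤ, n • a = 0 → n = 0)
    (D : G → Set A) (ψ : ∀ g : G, D g → A)
    (p q : G → ℤ)
    (hp : ∀ g, p g ≠ 0) (hq : ∀ g, q g ≠ 0)
    (hD : ∀ (g : G) (v : A), q g • v ∈ D g)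
    (hdil : ∀ (g : G) (v : A), ψ g ⟨q g • v, hD g v⟩ = p g • v)
    (hD1 : D 1 = Set.univ)
    (hψ1 : ∀ x : D 1, ψ 1 x = (x : A))
    (hcomp : ∀ (g h : G) (x : A) (hx : x ∈ D g)
        (hx' : ψ g ⟨x, hx⟩ ∈ D h),
        ∃ hxgh : x ∈ D (g * h),
          ψ (g * h) ⟨x, hxgh⟩ = ψ h ⟨ψ g ⟨x, hx⟩, hx'⟩) :
    (∀ g h : G,
        (p (g * h) : ℚ) / (q (g * h) : ℚ) =
          ((p g : ℚ) / (q g : ℚ)) * ((p h : ℚ) / (q h : ℚ))) ∧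
      (p (1 : G) : ℚ) / (q (1 : G) : ℚ) = 1 := by
  have key : ∀ (g : G) (x v : A) (hx : x ∈ D g), x = q g • v → ψ g ⟨x, hx⟩ = p g • v := by
    intro g x v hx h
    subst h
    exact hdil g v
  have inj : ∀ m n : ℤ, m • a = n • a → m = n := by
    intro m n h
    have := ha (m - n) (by rw [sub_smul, h, sub_self])
    omega
  refine ⟨fun g h => ?_, ?_⟩
  · have hx : (q g * (q h * q (g * h))) • a ∈ D g := by
      rw [mul_smul]; exact hD g _
    have e1 : ψ g ⟨_, hx⟩ = q h • ((p g * q (g * h)) • a) := by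
      rw [key g _ ((q h * q (g * h)) • a) hx (mul_smul _ _ _), smul_smul, smul_smul]
      congr 1; ring
    have hx' : ψ g ⟨_, hx⟩ ∈ D h := by rw [e1]; exact hD h _
    obtain ⟨h1, h2⟩ := hcomp g h _ hx hx'
    rw [key h _ _ hx' e1, key (g * h) _ ((q g * q h) • a) h1
      (by rw [smul_smul]; congr 1; ring), smul_smul, smul_smul] at h2
    have h3 := inj _ _ h2
    have h4 : (p (g * h) : ℚ) * (q g * q h) = p h * (p g * q (g * h)) := by exact_mod_cast h3
    have a1 : (q g : ℚ) ≠ 0 := by exact_mod_cast hq g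
    have a2 : (q h : ℚ) ≠ 0 := by exact_mod_cast hq h
    have a3 : (q (g * h) : ℚ) ≠ 0 := by exact_mod_cast hq (g * h)
    rw [div_mul_div_comm, div_eq_div_iff a3 (mul_ne_zero a1 a2), h4]
    ring
  · have h := hdil 1 a
    rw [hψ1] at h
    have h3 := inj _ _ h
    have a1 : (q (1 : G) : ℚ) ≠ 0 := by exact_mod_cast hq 1
    rw [← h3, div_self a1]
end
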